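/- Let k ≥ 1 and δ ≥ 2 be integers and let n ≥ (δ² + kδ + 7δ + 6k + 9)(δ² + kδ + 1). For every graph G in the family 𝓑₂(n,k,δ), the Q-index satisfies q(G) < 2(n − δ − k − 1). -/

import Mathlib

open Finset Matrix

/-- The signless Laplacian matrix `Q(G) = D(G) + A(G)` of a graph. -/
noncomputable def signlessLaplacian {V : Type*} [Fintype V] [DecidableEq V]
    (G : SimpleGraph V) [DecidableRel G.Adj] : Matrix V V ℝ :=
  Matrix.diagonal (fun v => (G.degree v : ℝ)) + G.adjMatrix ℝ

/-- The Q-index (largest eigenvalue of the signless Laplacian). -/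
noncomputable def qIndex {V : Type*} [Fintype V] [DecidableEq V]
    (G : SimpleGraph V) [DecidableRel G.Adj] : ℝ :=
  sSup {μ : ℝ | ∃ x : V → ℝ, x ≠ 0 ∧ signlessLaplacian G *ᵥ x = μ • x}

/-- The adjacency spectral radius (largest eigenvalue of the adjacency matrix). -/
noncomputable def adjSpecRad {V : Type*} [Fintype V] [DecidableEq V]
    (G : SimpleGraph V) [DecidableRel G.Adj] : ℝ :=
  sSup {μ : ℝ | ∃ x : V → ℝ, x ≠ 0 ∧ G.adjMatrix ℝ *ᵥ x = μ • x}

/-- A graph is `k`-path-coverable if its vertex set can be covered by at most `k`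
vertex-disjoint paths. -/
def PathCoverable {V : Type*} (G : SimpleGraph V) (k : ℕ) : Prop :=
  ∃ (m : ℕ) (P : Fin m → Σ (u : V) (v : V), G.Walk u v),
    m ≤ k ∧
    (∀ i, (P i).2.2.IsPath) ∧
    (∀ v : V, ∃ i, v ∈ (P i).2.2.support) ∧
    (∀ i j, i ≠ j → ∀ v, v ∈ (P i).2.2.support → v ∉ (P j).2.2.support)

/-- A graph is traceable if it has a Hamilton path. -/
def Traceable {V : Type*} (G : SimpleGraph V) : Prop :=
  ∃ (u v : V) (p : G.Walk u v), p.IsPath ∧ ∀ w, w ∈ p.support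

/-- `B(n,k,δ) = K_δ ∨ (K_{n-2δ-k} ∪ complement K_{δ+k})`: the first `δ` vertices form the
dominating clique `Y`, the next `n-2δ-k` vertices form the clique `Z`, and the
last `δ+k` vertices form the independent set `X`. -/
def Bgraph (n k δ : ℕ) : SimpleGraph (Fin n) where
  Adj i j := i ≠ j ∧ ((i : ℕ) < δ ∨ (j : ℕ) < δ ∨
      ((i : ℕ) < n - (δ + k) ∧ (j : ℕ) < n - (δ + k)))
  symm := by
    refine ⟨?_⟩
    rintro i j ⟨hne, h⟩
    exact ⟨hne.symm, by tauto⟩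
  loopless := by
    refine ⟨?_⟩
    rintro i ⟨h, -⟩
    exact h rfl

instance (n k δ : ℕ) : DecidableRel (Bgraph n k δ).Adj := fun i j =>
  inferInstanceAs (Decidable (i ≠ j ∧ ((i : ℕ) < δ ∨ (j : ℕ) < δ ∨
      ((i : ℕ) < n - (δ + k) ∧ (j : ℕ) < n - (δ + k)))))

instance {n : ℕ} (G : SimpleGraph (Fin n)) [DecidableRel G.Adj]
    (E' : Finset (Sym2 (Fin n))) : DecidableRel (G.deleteEdges ↑E').Adj := fun a b =>
  decidable_of_iff (G.Adj a b ∧ s(a, b) ∉ E') (by simp)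

/-- The edge set `E₁` of `B(n,k,δ)`: edges with both endpoints in `Y ∪ Z`. -/
def IsE1Edge (n k δ : ℕ) (e : Sym2 (Fin n)) : Prop :=
  e ∈ (Bgraph n k δ).edgeSet ∧ ∀ v ∈ e, (v : ℕ) < n - (δ + k)

/-- The family `𝓑₁(n,k,δ)`, up to isomorphism. -/
def InB1 (n k δ : ℕ) (G : SimpleGraph (Fin n)) : Prop :=
  ∃ E' : Finset (Sym2 (Fin n)),
    (∀ e ∈ E', IsE1Edge n k δ e) ∧ E'.card ≤ δ * (δ + k) / 4 ∧
    Nonempty (G ≃g (Bgraph n k δ).deleteEdges ↑E')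

/-- The family `𝓑₂(n,k,δ)`, up to isomorphism. -/
def InB2 (n k δ : ℕ) (G : SimpleGraph (Fin n)) : Prop :=
  ∃ E' : Finset (Sym2 (Fin n)),
    (∀ e ∈ E', IsE1Edge n k δ e) ∧ E'.card = δ * (δ + k) / 4 + 1 ∧
    Nonempty (G ≃g (Bgraph n k δ).deleteEdges ↑E')

/-!
By the Collatz–Wielandt principle it suffices to find a positive vector `f` with
`Q f < 2 (#W - 1) f` entrywise, where `W = Y ∪ Z` and `2 (#W - 1)` is the Q-index of the clique
on `W`. Perturb the eigenvector of this clique: let `f` be `1 + p [v ∈ Y] - q deg_F v` on `W`,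
where `F` is the graph of deleted edges, and a small constant `t` outside `W`. Attaching the `m`
vertices outside `W` to `Y` is paid for at `Y` by `p ≈ m / #W`, and the deleted edges are paid for
by `q ≈ 2 / #W`. The inequality on the rest of `W` then says that the sum of the perturbation is
negative, `#Y * p < 2 q * #E(F)`, which to leading order is `#Y * m < 4 * #E(F)`; for `m = δ + k`
this is where `⌊δ(δ+k)/4⌋ + 1` edges come from.
-/

section CollatzWielandt

theorem finite_setOf_eigenvalue {ι K : Type*} [Fintype ι] [Field K] (A : Matrix ι ι K) :
    {μ : K | ∃ x : ι → K, x ≠ 0 ∧ A *ᵥ x = μ • x}.Finite := by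
  classical
  refine (Module.End.finite_hasEigenvalue (toLin' A)).subset ?_
  rintro μ ⟨x, hx, hAx⟩
  exact Module.End.hasEigenvalue_of_hasEigenvector
    ⟨Module.End.mem_eigenspace_iff.2 (by rw [toLin'_apply, hAx]), hx⟩

variable {ι R : Type*} [Fintype ι] [Field R] [LinearOrder R] [IsStrictOrderedRing R]

theorem abs_eigenvalue_lt_of_mulVec_lt {A : Matrix ι ι R} {f x : ι → R} {c μ : R}
    (hA : ∀ i j, 0 ≤ A i j) (hf : ∀ i, 0 < f i) (hAf : ∀ i, (A *ᵥ f) i < c * f i)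
    (hx : x ≠ 0) (hμ : A *ᵥ x = μ • x) : |μ| < c := by
  obtain ⟨j, hj⟩ := Function.ne_iff.1 hx
  have : Nonempty ι := ⟨j⟩
  obtain ⟨i, hi⟩ := Finite.exists_max fun i => |x i| / f i
  set M := |x i| / f i
  have hM : 0 < M := (div_pos (abs_pos.2 hj) (hf j)).trans_le (hi j)
  have hxM (j : ι) : |x j| ≤ M * f j := (div_le_iff₀ (hf j)).1 (hi j)
  have hxi : |x i| = M * f i := (div_mul_cancel₀ _ (hf i).ne').symm
  refine lt_of_mul_lt_mul_right ?_ (abs_nonneg (x i))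
  calc |μ| * |x i| = |∑ j, A i j * x j| := by
        rw [← abs_mul, ← smul_eq_mul, ← Pi.smul_apply, ← hμ]; rfl
    _ ≤ ∑ j, A i j * (M * f j) := (abs_sum_le_sum_abs _ _).trans <| sum_le_sum fun j _ => by
        rw [abs_mul, abs_of_nonneg (hA i j)]
        exact mul_le_mul_of_nonneg_left (hxM j) (hA i j)
    _ = M * (A *ᵥ f) i := by
        simp only [mulVec, dotProduct, mul_sum, mul_left_comm]
    _ < M * (c * f i) := mul_lt_mul_of_pos_left (hAf i) hM
    _ = c * |x i| := by rw [hxi, mul_left_comm]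

end CollatzWielandt

section QIndex

variable {V V' : Type*} [Fintype V] [DecidableEq V] [Fintype V'] [DecidableEq V']
  {G H : SimpleGraph V} [DecidableRel G.Adj] [DecidableRel H.Adj]

theorem signlessLaplacian_nonneg (u v : V) : 0 ≤ signlessLaplacian G u v := by
  rw [signlessLaplacian, Matrix.add_apply, diagonal_apply, SimpleGraph.adjMatrix_apply]
  positivity

theorem signlessLaplacian_mulVec_apply (f : V → ℝ) (v : V) :
    (signlessLaplacian G *ᵥ f) v = ∑ u ∈ G.neighborFinset v, (f v + f u) := by
  rw [signlessLaplacian, add_mulVec, Pi.add_apply, mulVec_diagonal,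
    SimpleGraph.adjMatrix_mulVec_apply, sum_add_distrib, sum_const,
    SimpleGraph.card_neighborFinset_eq_degree, nsmul_eq_mul]

theorem signlessLaplacian_sdiff_mulVec_apply (hHG : H ≤ G) (f : V → ℝ) (v : V) :
    (signlessLaplacian (G \ H) *ᵥ f) v =
      (signlessLaplacian G *ᵥ f) v - (signlessLaplacian H *ᵥ f) v := by
  have hsub : H.neighborFinset v ⊆ G.neighborFinset v := fun u => by
    simpa only [SimpleGraph.mem_neighborFinset] using fun h => hHG h
  simp only [signlessLaplacian_mulVec_apply, SimpleGraph.neighborFinset_sdiff]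
  exact eq_sub_of_add_eq (sum_sdiff hsub)

theorem signlessLaplacian_submatrix_iso {G' : SimpleGraph V'} [DecidableRel G'.Adj]
    (φ : G ≃g G') : (signlessLaplacian G').submatrix φ φ = signlessLaplacian G := by
  ext u v
  simp only [signlessLaplacian, submatrix_apply, Matrix.add_apply, diagonal_apply,
    SimpleGraph.adjMatrix_apply, φ.injective.eq_iff, φ.degree_eq, φ.map_adj_iff]

theorem signlessLaplacian_mulVec_comp_iso {G' : SimpleGraph V'} [DecidableRel G'.Adj]
    (φ : G ≃g G') (x : V' → ℝ) :
    signlessLaplacian G *ᵥ (x ∘ φ) = (signlessLaplacian G' *ᵥ x) ∘ φ := by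
  rw [← signlessLaplacian_submatrix_iso φ]
  exact (submatrix_mulVec_equiv _ _ φ φ.toEquiv).trans
    (congrArg (fun y => (signlessLaplacian G' *ᵥ y) ∘ φ)
      (funext fun v => congrArg x (φ.apply_symm_apply v)))

theorem qIndex_congr {G' : SimpleGraph V'} [DecidableRel G'.Adj] (φ : G ≃g G') :
    qIndex G = qIndex G' := by
  refine congrArg sSup <| Set.ext fun μ =>
    φ.injective.surjective_comp_right.exists.trans <| exists_congr fun x => ?_
  have hinj := φ.surjective.injective_comp_right (γ := ℝ)
  rw [signlessLaplacian_mulVec_comp_iso]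
  exact and_congr (hinj.ne_iff' rfl) (hinj.eq_iff (b := μ • x))

theorem qIndex_lt_of_mulVec_lt [Nonempty V] {f : V → ℝ} {c : ℝ} (hf : ∀ v, 0 < f v)
    (hGf : ∀ v, (signlessLaplacian G *ᵥ f) v < c * f v) : qIndex G < c := by
  have hc : 0 < c := by
    obtain ⟨v⟩ := ‹Nonempty V›
    refine pos_of_mul_pos_left (lt_of_le_of_lt ?_ (hGf v)) (hf v).le
    rw [signlessLaplacian_mulVec_apply]
    exact sum_nonneg fun u _ => (add_pos (hf v) (hf u)).le
  rw [qIndex]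
  rcases Set.eq_empty_or_nonempty {μ : ℝ | ∃ x, x ≠ 0 ∧ signlessLaplacian G *ᵥ x = μ • x}
    with hempty | hne
  · rwa [hempty, Real.sSup_empty]
  · rw [(finite_setOf_eigenvalue _).csSup_lt_iff hne]
    rintro μ ⟨x, hx, hμ⟩
    exact (le_abs_self μ).trans_lt
      (abs_eigenvalue_lt_of_mulVec_lt signlessLaplacian_nonneg hf hGf hx hμ)

end QIndex

section NestedSplit

variable {V : Type*} {Y W : Finset V}

/-- The graph `K_Y ∨ (K_{W \ Y} ∪ \bar K_{V \ W})` for `Y ⊆ W ⊆ V`, which is `Bgraph` up to the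
choice of `Y` and `W`. -/
def nestedSplit (Y W : Finset V) : SimpleGraph V where
  Adj u v := u ≠ v ∧ (u ∈ Y ∨ v ∈ Y ∨ (u ∈ W ∧ v ∈ W))
  symm := ⟨fun _ _ ⟨hne, h⟩ => ⟨hne.symm, by tauto⟩⟩
  loopless := ⟨fun _ h => h.1 rfl⟩

instance [DecidableEq V] (Y W : Finset V) : DecidableRel (nestedSplit Y W).Adj := fun u v =>
  inferInstanceAs (Decidable (u ≠ v ∧ (u ∈ Y ∨ v ∈ Y ∨ (u ∈ W ∧ v ∈ W))))

theorem nestedSplit_adj {u v : V} :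
    (nestedSplit Y W).Adj u v ↔ u ≠ v ∧ (u ∈ Y ∨ v ∈ Y ∨ (u ∈ W ∧ v ∈ W)) :=
  Iff.rfl

theorem le_nestedSplit_of_support_subset {F : SimpleGraph V} (hF : F.support ⊆ W) :
    F ≤ nestedSplit Y W := fun u v h =>
  ⟨h.ne, .inr (.inr ⟨hF ⟨v, h⟩, hF ⟨u, h.symm⟩⟩)⟩

variable [Fintype V] [DecidableEq V] (f : V → ℝ) {v : V}

theorem signlessLaplacian_nestedSplit_mulVec_of_mem_left (hv : v ∈ Y) :
    (signlessLaplacian (nestedSplit Y W) *ᵥ f) v =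
      (Fintype.card V - 2) * f v + ∑ u, f u := by
  have hN : (nestedSplit Y W).neighborFinset v = univ.erase v := by
    ext u
    simp [nestedSplit_adj, hv, eq_comm]
  rw [signlessLaplacian_mulVec_apply, hN, sum_erase_eq_sub (mem_univ v), sum_add_distrib,
    sum_const, nsmul_eq_mul, card_univ]
  ring

theorem signlessLaplacian_nestedSplit_mulVec_of_mem_sdiff (hYW : Y ⊆ W) (hv : v ∈ W \ Y) :
    (signlessLaplacian (nestedSplit Y W) *ᵥ f) v = (#W - 2) * f v + ∑ u ∈ W, f u := by
  obtain ⟨hvW, hvY⟩ := mem_sdiff.1 hv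
  have hN : (nestedSplit Y W).neighborFinset v = W.erase v := by
    ext u
    have := @hYW u
    simp only [SimpleGraph.mem_neighborFinset, nestedSplit_adj, mem_erase, ne_comm (a := v)]
    tauto
  rw [signlessLaplacian_mulVec_apply, hN, sum_erase_eq_sub hvW, sum_add_distrib,
    sum_const, nsmul_eq_mul]
  ring

theorem signlessLaplacian_nestedSplit_mulVec_of_notMem (hYW : Y ⊆ W) (hv : v ∉ W) :
    (signlessLaplacian (nestedSplit Y W) *ᵥ f) v = #Y * f v + ∑ u ∈ Y, f u := by
  have hN : (nestedSplit Y W).neighborFinset v = Y := by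
    ext u
    have hvY : v ∉ Y := fun h => hv (hYW h)
    simp only [SimpleGraph.mem_neighborFinset, nestedSplit_adj, hvY, hv, false_and, or_false,
      false_or, and_iff_right_iff_imp]
    exact fun hu => (ne_of_mem_of_not_mem hu hvY).symm
  rw [signlessLaplacian_mulVec_apply, hN, sum_add_distrib, sum_const, nsmul_eq_mul]

end NestedSplit

section TestVector

variable {V : Type*} [Fintype V] [DecidableEq V] {Y W : Finset V} {F : SimpleGraph V}
  [DecidableRel F.Adj] {p q t : ℝ} {v : V}

/-- The vector used to bound the Q-index of `nestedSplit Y W \ F`: constant outside `W`, and on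
`W` a perturbation of `1` increased on `Y` and decreased in proportion to the degree in `F`. -/
def testVector (Y W : Finset V) (F : SimpleGraph V) [DecidableRel F.Adj] (p q t : ℝ) (v : V) : ℝ :=
  if v ∈ W then 1 + (if v ∈ Y then p else 0) - q * F.degree v else t

theorem testVector_of_mem_left (hYW : Y ⊆ W) (hv : v ∈ Y) :
    testVector Y W F p q t v = 1 + p - q * F.degree v := by
  rw [testVector, if_pos (hYW hv), if_pos hv]

theorem testVector_of_mem_sdiff (hv : v ∈ W \ Y) :
    testVector Y W F p q t v = 1 - q * F.degree v := by
  rw [testVector, if_pos (mem_sdiff.1 hv).1, if_neg (mem_sdiff.1 hv).2, add_zero]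

theorem testVector_of_notMem (hv : v ∉ W) : testVector Y W F p q t v = t :=
  if_neg hv

theorem one_sub_le_testVector (hp : 0 ≤ p) (hv : v ∈ W) :
    1 - q * F.degree v ≤ testVector Y W F p q t v := by
  rw [testVector, if_pos hv]
  split_ifs <;> linarith

theorem one_sub_mul_card_le_testVector (hp : 0 ≤ p) (hq : 0 ≤ q) (hv : v ∈ W) :
    1 - q * #F.edgeFinset ≤ testVector Y W F p q t v := by
  have hdeg : (F.degree v : ℝ) ≤ #F.edgeFinset := mod_cast F.degree_le_card_edgeFinset v
  linarith [mul_le_mul_of_nonneg_left hdeg hq,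
    one_sub_le_testVector (Y := Y) (F := F) (q := q) (t := t) hp hv]

theorem testVector_pos (hp : 0 ≤ p) (hq : 0 ≤ q) (hqe : q * #F.edgeFinset < 1) (ht : 0 < t)
    (v : V) : 0 < testVector Y W F p q t v := by
  by_cases hv : v ∈ W
  · exact (sub_pos.2 hqe).trans_le (one_sub_mul_card_le_testVector hp hq hv)
  · rwa [testVector_of_notMem hv]

theorem sum_testVector_left_le (hYW : Y ⊆ W) (hq : 0 ≤ q) :
    ∑ v ∈ Y, testVector Y W F p q t v ≤ #Y * (1 + p) := by
  rw [← nsmul_eq_mul]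
  refine sum_le_card_nsmul _ _ _ fun v hv => ?_
  rw [testVector_of_mem_left hYW hv]
  exact sub_le_self _ (by positivity)

theorem sum_testVector_right (hYW : Y ⊆ W) (hF : F.support ⊆ W) :
    ∑ v ∈ W, testVector Y W F p q t v = #W + #Y * p - 2 * q * #F.edgeFinset := by
  have hdeg : ∑ v ∈ W, (F.degree v : ℝ) = 2 * #F.edgeFinset := by
    rw [sum_subset (subset_univ W) fun v _ hv => ?_]
    · exact_mod_cast F.sum_degrees_eq_twice_card_edges
    · exact_mod_cast (F.degree_eq_zero_iff_notMem_support v).2 fun h => hv (hF h)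
  have hsum : ∑ v ∈ W, testVector Y W F p q t v =
      ∑ v ∈ W, (1 + (if v ∈ Y then p else 0) - q * F.degree v) :=
    sum_congr rfl fun v hv => if_pos hv
  rw [hsum, sum_sub_distrib, sum_add_distrib, ← mul_sum, hdeg, sum_ite_mem, inter_eq_right.2 hYW]
  simp only [sum_const, nsmul_eq_mul]
  ring

theorem sum_testVector (hYW : Y ⊆ W) (hF : F.support ⊆ W) :
    ∑ v, testVector Y W F p q t v = #W + #Y * p - 2 * q * #F.edgeFinset + #Wᶜ * t := by
  rw [← sum_add_sum_compl W, sum_testVector_right hYW hF,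
    sum_congr rfl fun v hv => testVector_of_notMem (mem_compl.1 hv), sum_const, nsmul_eq_mul]

-- `q` is chosen so that what the deleted edges remove from row `v` compensates exactly for the
-- decrease `q * F.degree v` of the test vector there.
theorem le_signlessLaplacian_mulVec_testVector (hF : F.support ⊆ W) (hp : 0 ≤ p) (hq : 0 ≤ q)
    (hqe : q * (#W + 2 * #F.edgeFinset) = 2) (v : V) :
    F.degree v * (q * #W) ≤ (signlessLaplacian F *ᵥ testVector Y W F p q t) v := by
  rw [signlessLaplacian_mulVec_apply, ← nsmul_eq_mul, ← SimpleGraph.card_neighborFinset_eq_degree]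
  refine card_nsmul_le_sum _ _ _ fun u hu => ?_
  have huv : F.Adj v u := (F.mem_neighborFinset v u).1 hu
  have hfv := one_sub_mul_card_le_testVector (Y := Y) (F := F) (t := t) hp hq (hF ⟨u, huv⟩)
  have hfu := one_sub_mul_card_le_testVector (Y := Y) (F := F) (t := t) hp hq (hF ⟨v, huv.symm⟩)
  linarith

theorem signlessLaplacian_mulVec_testVector_lt_of_mem_left (hYW : Y ⊆ W) (hF : F.support ⊆ W)
    (hp : 0 ≤ p) (hq : 0 ≤ q) (hqe : q * (#W + 2 * #F.edgeFinset) = 2)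
    (hpt : #Wᶜ * (1 + p + t) ≤ #W * p) (hsum : #Y * p < 2 * q * #F.edgeFinset) (hv : v ∈ Y) :
    (signlessLaplacian (nestedSplit Y W \ F) *ᵥ testVector Y W F p q t) v <
      2 * (#W - 1) * testVector Y W F p q t v := by
  rw [signlessLaplacian_sdiff_mulVec_apply (le_nestedSplit_of_support_subset hF),
    signlessLaplacian_nestedSplit_mulVec_of_mem_left _ hv, sum_testVector hYW hF,
    ← card_add_card_compl W]
  have hdeleted := le_signlessLaplacian_mulVec_testVector (Y := Y) (t := t) hF hp hq hqe v
  have hfv := testVector_of_mem_left (F := F) (p := p) (q := q) (t := t) hYW hv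
  have hle : #Wᶜ * testVector Y W F p q t v ≤ #Wᶜ * (1 + p) := by
    rw [hfv]
    gcongr
    exact sub_le_self _ (by positivity)
  push_cast
  linear_combination hdeleted + hpt + hsum + hle - (#W : ℝ) * hfv

theorem signlessLaplacian_mulVec_testVector_lt_of_mem_sdiff (hYW : Y ⊆ W) (hF : F.support ⊆ W)
    (hp : 0 ≤ p) (hq : 0 ≤ q) (hqe : q * (#W + 2 * #F.edgeFinset) = 2)
    (hsum : #Y * p < 2 * q * #F.edgeFinset) (hv : v ∈ W \ Y) :
    (signlessLaplacian (nestedSplit Y W \ F) *ᵥ testVector Y W F p q t) v <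
      2 * (#W - 1) * testVector Y W F p q t v := by
  rw [signlessLaplacian_sdiff_mulVec_apply (le_nestedSplit_of_support_subset hF),
    signlessLaplacian_nestedSplit_mulVec_of_mem_sdiff _ hYW hv, sum_testVector_right hYW hF]
  have hdeleted := le_signlessLaplacian_mulVec_testVector (Y := Y) (t := t) hF hp hq hqe v
  have hfv := testVector_of_mem_sdiff (F := F) (p := p) (q := q) (t := t) hv
  linear_combination hdeleted + hsum - (#W : ℝ) * hfv

theorem signlessLaplacian_mulVec_testVector_lt_of_notMem (hYW : Y ⊆ W) (hF : F.support ⊆ W)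
    (hq : 0 ≤ q) (ht : #Y * (1 + p + t) < 2 * (#W - 1) * t) (hv : v ∉ W) :
    (signlessLaplacian (nestedSplit Y W \ F) *ᵥ testVector Y W F p q t) v <
      2 * (#W - 1) * testVector Y W F p q t v := by
  have hFv : F.neighborFinset v = ∅ :=
    card_eq_zero.1 <| (F.degree_eq_zero_iff_notMem_support v).2 fun h => hv (hF h)
  rw [signlessLaplacian_sdiff_mulVec_apply (le_nestedSplit_of_support_subset hF),
    signlessLaplacian_nestedSplit_mulVec_of_notMem _ hYW hv, signlessLaplacian_mulVec_apply,
    hFv, sum_empty, testVector_of_notMem hv]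
  linarith [sum_testVector_left_le (F := F) (p := p) (t := t) hYW hq]

theorem qIndex_nestedSplit_sdiff_lt_of_testVector (hYW : Y ⊆ W) (hF : F.support ⊆ W)
    (hp : 0 ≤ p) (ht : 0 < t) (hqe : q * (#W + 2 * #F.edgeFinset) = 2)
    (hpt : #Wᶜ * (1 + p + t) ≤ #W * p) (htp : #Y * (1 + p + t) < 2 * (#W - 1) * t)
    (hsum : #Y * p < 2 * q * #F.edgeFinset) :
    qIndex (nestedSplit Y W \ F) < 2 * (#W - 1) := by
  have hq : 0 < q := pos_of_mul_pos_left (hqe ▸ two_pos) (by positivity)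
  have hW : (1 : ℝ) < #W := by
    have := pos_of_mul_pos_left ((by positivity : 0 ≤ #Y * (1 + p + t)).trans_lt htp) ht.le
    linarith
  have hqe1 : q * #F.edgeFinset < 1 := by linarith [mul_pos hq (one_pos.trans hW)]
  obtain ⟨w, -⟩ : W.Nonempty := card_pos.1 (by exact_mod_cast one_pos.trans hW)
  have : Nonempty V := ⟨w⟩
  refine qIndex_lt_of_mulVec_lt (testVector_pos (Y := Y) (W := W) hp hq.le hqe1 ht) fun v => ?_
  by_cases hvW : v ∈ W
  · by_cases hvY : v ∈ Y
    · exact signlessLaplacian_mulVec_testVector_lt_of_mem_left hYW hF hp hq.le hqe hpt hsum hvY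
    · exact signlessLaplacian_mulVec_testVector_lt_of_mem_sdiff hYW hF hp hq.le hqe hsum
        (mem_sdiff.2 ⟨hvW, hvY⟩)
  · exact signlessLaplacian_mulVec_testVector_lt_of_notMem hYW hF hq.le htp hvW

theorem qIndex_nestedSplit_sdiff_lt (hYW : Y ⊆ W) (hF : F.support ⊆ W)
    (hcard : #Y * #Wᶜ < 4 * #F.edgeFinset)
    (hW : (#Y * #Wᶜ + 1) * (#Y * #Wᶜ + 2 * #Y + 2 * #Wᶜ + 2) < 2 * #W) :
    qIndex (nestedSplit Y W \ F) < 2 * (#W - 1) := by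
  have hcard' : (#Y * #Wᶜ + 1 : ℝ) ≤ 4 * #F.edgeFinset := by exact_mod_cast hcard
  have hW' : (#Y * #Wᶜ + 1 : ℝ) * (#Y * #Wᶜ + 2 * #Y + 2 * #Wᶜ + 2) < 2 * #W := by
    exact_mod_cast hW
  set N : ℝ := (#W : ℝ)
  set m : ℝ := (#Wᶜ : ℝ)
  set d : ℝ := (#Y : ℝ)
  set e : ℝ := (#F.edgeFinset : ℝ)
  have hm : 0 ≤ m := Nat.cast_nonneg _
  have hd : 0 ≤ d := Nat.cast_nonneg _
  have hdm : 0 ≤ d * m := mul_nonneg hd hm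
  have hbase : d * m + 2 * d + 2 * m + 2 < 2 * N := by nlinarith
  have he : 0 < N + 2 * e := by linarith
  have hM : 0 < N - m - d - 1 := by linarith
  have hsum : 1 + m / (N - m - d - 1) + (d + 1) / (N - m - d - 1) = N / (N - m - d - 1) := by
    field_simp
    ring
  -- These `p` and `t` turn the requirement at `Y` into an equality and the one outside `W` into
  -- `#Y * #W < 2 * (#W - 1) * (#Y + 1)`.
  refine qIndex_nestedSplit_sdiff_lt_of_testVector (p := m / (N - m - d - 1))
    (q := 2 / (N + 2 * e)) (t := (d + 1) / (N - m - d - 1)) hYW hF (by positivity) (by positivity)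
    (div_mul_cancel₀ _ he.ne') ?_ ?_ ?_
  · rw [hsum, mul_div_left_comm]
  · rw [hsum, ← mul_div_assoc, ← mul_div_assoc]
    refine div_lt_div_of_pos_right ?_ hM
    nlinarith
  · rw [← mul_div_assoc, ← mul_div_assoc, div_mul_eq_mul_div, div_lt_div_iff₀ hM he]
    nlinarith [mul_nonneg (sub_nonneg.2 hcard') (sub_pos.2 hbase).le]

end TestVector

section Bgraph

theorem edgeFinset_fromEdgeSet {V : Type*} {E : Finset (Sym2 V)}
    [Fintype (SimpleGraph.fromEdgeSet (E : Set (Sym2 V))).edgeSet] (hE : ∀ e ∈ E, ¬e.IsDiag) :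
    (SimpleGraph.fromEdgeSet (E : Set (Sym2 V))).edgeFinset = E := by
  ext e
  rw [SimpleGraph.mem_edgeFinset, SimpleGraph.edgeSet_fromEdgeSet]
  exact and_iff_left_of_imp (hE e)

theorem support_fromEdgeSet_subset {V : Type*} {E : Set (Sym2 V)} {s : Set V}
    (hE : ∀ e ∈ E, ∀ v ∈ e, v ∈ s) : (SimpleGraph.fromEdgeSet E).support ⊆ s :=
  fun v ⟨w, hvw⟩ => hE _ hvw.1 v (Sym2.mem_mk_left v w)

theorem Bgraph_eq_nestedSplit (n k δ : ℕ) :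
    Bgraph n k δ =
      nestedSplit {i : Fin n | (i : ℕ) < δ} {i : Fin n | (i : ℕ) < n - (δ + k)} := by
  ext i j
  simp only [Bgraph, nestedSplit_adj, mem_filter_univ]

theorem qIndex_lt_of_inB2_general {V : Type*} [Fintype V] [DecidableEq V] {k δ n : ℕ}
    (hn : (δ * (δ + k) + 1) * (δ * (δ + k) + 4 * δ + 2 * k + 2) + 2 * (δ + k) < 2 * n)
    {E' : Finset (Sym2 (Fin n))} (hE : ∀ e ∈ E', IsE1Edge n k δ e)
    (hcard : δ * (δ + k) < 4 * #E') {G : SimpleGraph V} [DecidableRel G.Adj]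
    (φ : G ≃g (Bgraph n k δ).deleteEdges ↑E') : qIndex G < 2 * ((n : ℝ) - δ - k - 1) := by
  have hδn : 2 * δ + k ≤ n := by
    have : 0 < δ * (δ + k) + 1 := by positivity
    linarith [Nat.le_mul_of_pos_left (δ * (δ + k) + 4 * δ + 2 * k + 2) this]
  set Y : Finset (Fin n) := {i | (i : ℕ) < δ} with hYdef
  set W : Finset (Fin n) := {i | (i : ℕ) < n - (δ + k)} with hWdef
  have hYW : Y ⊆ W := monotone_filter_right _ fun i _ hi => by omega
  have hY : #Y = δ := by rw [hYdef, Fin.card_filter_val_lt]; omega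
  have hW : #W + (δ + k) = n := by rw [hWdef, Fin.card_filter_val_lt]; omega
  have hX : #Wᶜ = δ + k := by rw [card_compl, Fintype.card_fin]; omega
  have hF : (SimpleGraph.fromEdgeSet (E' : Set (Sym2 (Fin n)))).support ⊆ W :=
    support_fromEdgeSet_subset fun e he v hv => mem_filter_univ _ |>.2 ((hE e he).2 v hv)
  have hloop : ∀ e ∈ E', ¬e.IsDiag :=
    fun e he => SimpleGraph.not_isDiag_of_mem_edgeSet _ (hE e he).1
  have hGF : G ≃g nestedSplit Y W \ SimpleGraph.fromEdgeSet E' := Bgraph_eq_nestedSplit n k δ ▸ φ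
  have hlt := qIndex_nestedSplit_sdiff_lt hYW hF
    (by rw [hY, hX]; convert hcard; convert edgeFinset_fromEdgeSet hloop)
    (by rw [hY, hX]; linarith)
  linarith [qIndex_congr hGF, (mod_cast hW : (#W : ℝ) + (δ + k) = n)]

end Bgraph

/-- **Lemma 3.7**: for `n` large, every graph in the family `𝓑₂(n,k,δ)` has Q-index less
than `2(n-δ-k-1)`. -/
theorem qIndex_lt_of_inB2 (k δ n : ℕ) (hk : 1 ≤ k) (hδ : 2 ≤ δ)
    (hn : (δ ^ 2 + k * δ + 7 * δ + 6 * k + 9) * (δ ^ 2 + k * δ + 1) ≤ n)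
    (G : SimpleGraph (Fin n)) [DecidableRel G.Adj] (hG : InB2 n k δ G) :
    qIndex G < 2 * ((n : ℝ) - δ - k - 1) := by
  obtain ⟨E', hE, hcard, ⟨φ⟩⟩ := hG
  have hnonneg := Nat.zero_le ((δ ^ 2 + k * δ) * (δ ^ 2 + k * δ + 10 * δ + 10 * k + 17))
  exact qIndex_lt_of_inB2_general (by linarith) hE (by omega) φ
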